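/- arXiv:1909.11473 — 2 statements merged into one kernel-verified Lean document; each statement's English description precedes it below -/
import Mathlib

section
/- The orbit of φ₀ under the action of GL(7,ℝ) by pullback, i.e. the set { (v₁,v₂,v₃) ↦ φ₀(g v₁, g v₂, g v₃) : g ∈ GL(7,ℝ) }, is an open subset of the (finite-dimensional) real vector space of alternating 3-forms on ℝ⁷, endowed with its canonical topology as a finite-dimensional normed space. -/
/-- The alternating 3-form `dx^{ijk}` on `ℝ⁷` (with indices `0`-based), given by
`(v₁,v₂,v₃) ↦ det` of the `3×3` matrix whose `a`-th row is `((vₐ)ᵢ, (vₐ)ⱼ, (vₐ)ₖ)`. -/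
noncomputable def dx (i j k : Fin 7) : AlternatingMap ℝ (Fin 7 → ℝ) ℝ (Fin 3) :=
  (Matrix.detRowAlternating : AlternatingMap ℝ (Fin 3 → ℝ) ℝ (Fin 3)).compLinearMap
    (LinearMap.funLeft ℝ ℝ ![i, j, k])

/-- The standard `G₂` 3-form
`φ₀ = dx^{123} + dx^{145} + dx^{167} + dx^{246} − dx^{257} − dx^{347} − dx^{356}` on `ℝ⁷`
(written with `0`-based indices). -/
noncomputable def phi0 : AlternatingMap ℝ (Fin 7 → ℝ) ℝ (Fin 3) :=
  dx 0 1 2 + dx 0 3 4 + dx 0 5 6 + dx 1 3 5 - dx 1 4 6 - dx 2 3 6 - dx 2 4 5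

/-- The canonical topology on the finite-dimensional real vector space of alternating 3-forms
on `ℝ⁷`: the topology induced from pointwise convergence, which (by uniqueness of the Hausdorff
vector space topology in finite dimensions) is the canonical topology of this finite-dimensional
normed space. -/
noncomputable instance : TopologicalSpace (AlternatingMap ℝ (Fin 7 → ℝ) ℝ (Fin 3)) :=
  TopologicalSpace.induced (fun φ => (⇑φ : (Fin 3 → Fin 7 → ℝ) → ℝ)) inferInstance

/-! The orbit map `g ↦ g* φ` of a 3-form is strictly differentiable, and by equivariance its
derivative at an invertible `g` is onto as soon as the derivative `A ↦ A · φ` at the identity is.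
In that case the orbit map is open at every invertible `g`, so the orbit is open. For `phi0` the
infinitesimal action `𝔤𝔩(7, ℝ) → Λ³(ℝ⁷)*` has kernel `𝔤₂`, and `49 - 14 = 35` is the dimension of
the target; a right inverse is a combination of the contraction of 3-forms with `phi0`, its
transpose and its trace. -/

open Set Filter Topology Module Matrix

section StableForms

variable {𝕜 ι E F : Type*} [NontriviallyNormedField 𝕜] [Fintype ι] [DecidableEq ι]
  [NormedAddCommGroup E] [NormedSpace 𝕜 E] [NormedAddCommGroup F] [NormedSpace 𝕜 F]

theorem compContinuousLinearMap_fderivCompContinuousLinearMap {G H : Type*}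
    [NormedAddCommGroup G] [NormedSpace 𝕜 G] [NormedAddCommGroup H] [NormedSpace 𝕜 H]
    (φ : G [⋀^ι]→L[𝕜] F) (g A : H →L[𝕜] G) (h : E →L[𝕜] H) :
    (φ.fderivCompContinuousLinearMap g A).compContinuousLinearMap h =
      φ.fderivCompContinuousLinearMap (g ∘L h) (A ∘L h) := by
  ext v
  simp only [ContinuousAlternatingMap.compContinuousLinearMap_apply,
    ContinuousAlternatingMap.fderivCompContinuousLinearMap_apply, Function.comp_apply]
  refine Finset.sum_congr rfl fun i _ ↦ congrArg φ (funext fun j ↦ ?_)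
  rcases eq_or_ne j i with rfl | hji
  · simp
  · simp [hji]

theorem surjective_fderivCompContinuousLinearMap {φ : E [⋀^ι]→L[𝕜] F}
    (hφ : Function.Surjective (φ.fderivCompContinuousLinearMap (.id 𝕜 E))) (g : E ≃L[𝕜] E) :
    Function.Surjective (φ.fderivCompContinuousLinearMap (g : E →L[𝕜] E)) := by
  intro ψ
  obtain ⟨A, hA⟩ := hφ (ψ.compContinuousLinearMap (g.symm : E →L[𝕜] E))
  have hpull := compContinuousLinearMap_fderivCompContinuousLinearMap φ (.id 𝕜 E) A (g : E →L[𝕜] E)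
  rw [ContinuousLinearMap.id_comp, hA] at hpull
  refine ⟨A ∘L (g : E →L[𝕜] E), hpull.symm.trans ?_⟩
  ext v
  simp [Function.comp_def]

theorem isOpen_range_compContinuousLinearMap [CompleteSpace E] [CompleteSpace F]
    {φ : E [⋀^ι]→L[𝕜] F}
    (hφ : Function.Surjective (φ.fderivCompContinuousLinearMap (.id 𝕜 E))) :
    IsOpen (range fun g : E ≃L[𝕜] E ↦ φ.compContinuousLinearMap (g : E →L[𝕜] E)) := by
  rw [isOpen_iff_mem_nhds, forall_mem_range]
  intro g
  have hderiv : HasStrictFDerivAt (fun h : E →L[𝕜] E ↦ φ.compContinuousLinearMap h)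
      (φ.fderivCompContinuousLinearMap (g : E →L[𝕜] E)) g := by
    simpa using (hasStrictFDerivAt_const φ (g : E →L[𝕜] E)
      ).continuousAlternatingMapCompContinuousLinearMap (hasStrictFDerivAt_id (g : E →L[𝕜] E))
  have hsurj := surjective_fderivCompContinuousLinearMap hφ g
  rw [← hderiv.map_nhds_eq_of_surj (LinearMap.range_eq_top.mpr hsurj)]
  filter_upwards [image_mem_map g.nhds]
  rintro _ ⟨_, ⟨h, rfl⟩, rfl⟩
  exact ⟨h, rfl⟩

theorem fderivCompContinuousLinearMap_id_vec3 (φ : E [⋀^Fin 3]→L[𝕜] F) (A : E →L[𝕜] E)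
    (x y z : E) :
    φ.fderivCompContinuousLinearMap (.id 𝕜 E) A ![x, y, z] =
      φ ![A x, y, z] + φ ![x, A y, z] + φ ![x, y, A z] := by
  rw [ContinuousAlternatingMap.fderivCompContinuousLinearMap_apply, Fin.sum_univ_three]
  congr 3 <;> ext j <;> fin_cases j <;> simp

end StableForms

section FiniteDimensional

variable {𝕜 ι E F : Type*} [NontriviallyNormedField 𝕜] [CompleteSpace 𝕜] [Finite ι]
  [NormedAddCommGroup E] [NormedSpace 𝕜 E] [FiniteDimensional 𝕜 E]
  [NormedAddCommGroup F] [NormedSpace 𝕜 F]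

theorem continuous_multilinearMap_of_finiteDimensional
    (f : MultilinearMap 𝕜 (fun _ : ι ↦ E) F) : Continuous f := by
  classical
  cases nonempty_fintype ι
  let b := finBasis 𝕜 E
  have expand (v : ι → E) :
      f v = ∑ r : ι → Fin (finrank 𝕜 E), (∏ i, b.coord (r i) (v i)) • f (fun i ↦ b (r i)) := by
    conv_lhs => rw [← funext fun i ↦ b.sum_repr (v i), f.map_sum]
    exact Finset.sum_congr rfl fun r _ ↦ f.map_smul_univ _ _
  have hcoord (j) : Continuous (b.coord j) := (b.coord j).continuous_of_finiteDimensional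
  rw [funext expand]
  fun_prop

/-- An alternating map on a finite-dimensional space, bundled with its automatic continuity. -/
def toContinuousAlternatingMap (φ : E [⋀^ι]→ₗ[𝕜] F) : E [⋀^ι]→L[𝕜] F where
  __ := φ
  cont := continuous_multilinearMap_of_finiteDimensional φ.toMultilinearMap

@[simp]
theorem toContinuousAlternatingMap_apply (φ : E [⋀^ι]→ₗ[𝕜] F) (v : ι → E) :
    toContinuousAlternatingMap φ v = φ v :=
  rfl

omit [CompleteSpace 𝕜] in
theorem finiteDimensional_continuousAlternatingMap [FiniteDimensional 𝕜 F] :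
    FiniteDimensional 𝕜 (E [⋀^ι]→L[𝕜] F) :=
  .of_injective
    (ContinuousMultilinearMap.toMultilinearMapLinear ∘ₗ
      ContinuousAlternatingMap.toContinuousMultilinearMapLinear (R := 𝕜))
    (ContinuousMultilinearMap.toMultilinearMap_injective.comp
      ContinuousAlternatingMap.toContinuousMultilinearMap_injective)

theorem isInducing_coe_continuousAlternatingMap [FiniteDimensional 𝕜 F] :
    IsInducing ((⇑) : E [⋀^ι]→L[𝕜] F → (ι → E) → F) := by
  have := finiteDimensional_continuousAlternatingMap (𝕜 := 𝕜) (ι := ι) (E := E) (F := F)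
  let coeFn : E [⋀^ι]→L[𝕜] F →ₗ[𝕜] (ι → E) → F :=
    { toFun := (⇑), map_add' := fun _ _ ↦ rfl, map_smul' := fun _ _ ↦ rfl }
  have hker : LinearMap.ker coeFn = ⊥ := LinearMap.ker_eq_bot.mpr DFunLike.coe_injective
  exact (LinearMap.isClosedEmbedding_of_injective hker).isInducing

theorem continuous_toContinuousAlternatingMap [FiniteDimensional 𝕜 F] {X : Type*}
    [TopologicalSpace X] {f : X → E [⋀^ι]→ₗ[𝕜] F} (hf : ∀ v, Continuous fun x ↦ f x v) :
    Continuous fun x ↦ toContinuousAlternatingMap (f x) :=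
  isInducing_coe_continuousAlternatingMap.continuous_iff.mpr (continuous_pi hf)

theorem toContinuousAlternatingMap_mem_range_iff {φ ψ : E [⋀^ι]→ₗ[𝕜] F} :
    toContinuousAlternatingMap ψ ∈ range (fun g : E ≃L[𝕜] E ↦
        (toContinuousAlternatingMap φ).compContinuousLinearMap (g : E →L[𝕜] E)) ↔
      ∃ g : E →ₗ[𝕜] E, Function.Bijective g ∧ ψ = φ.compLinearMap g := by
  constructor
  · rintro ⟨g, hg⟩
    exact ⟨g.toLinearEquiv, g.bijective, AlternatingMap.ext fun v ↦ (DFunLike.congr_fun hg v).symm⟩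
  · rintro ⟨g, hg, rfl⟩
    exact ⟨(LinearEquiv.ofBijective g hg).toContinuousLinearEquiv, rfl⟩

end FiniteDimensional

section AlternatingMap

variable {R M N : Type*} [CommSemiring R] [AddCommMonoid M] [Module R M]

theorem alternatingMap_ext_of_strictMono [AddCommGroup N] [Module R N] {κ : Type*} [LinearOrder κ]
    {n : ℕ} (b : Basis κ R M) {φ ψ : M [⋀^Fin n]→ₗ[R] N}
    (h : ∀ p : Fin n → κ, StrictMono p → φ (b ∘ p) = ψ (b ∘ p)) : φ = ψ := by
  refine b.ext_alternating fun p hp ↦ ?_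
  have hsort : StrictMono (p ∘ Tuple.sort p) :=
    (Tuple.monotone_sort p).strictMono_of_injective (hp.comp (Tuple.sort p).injective)
  have hsign := h _ hsort
  rw [← Function.comp_assoc, φ.map_perm, ψ.map_perm] at hsign
  exact smul_left_cancel _ hsign

theorem alternatingMap_ext_vec3 [AddCommMonoid N] [Module R N] {φ ψ : M [⋀^Fin 3]→ₗ[R] N} :
    φ = ψ ↔ ∀ x y z, φ ![x, y, z] = ψ ![x, y, z] := by
  refine ⟨fun h _ _ _ ↦ by rw [h], fun h ↦ AlternatingMap.ext fun v ↦ ?_⟩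
  have hv : v = ![v 0, v 1, v 2] := by ext i; fin_cases i <;> rfl
  rw [hv, h]

theorem compLinearMap_vec3 [AddCommMonoid N] [Module R N] {M' : Type*} [AddCommMonoid M']
    [Module R M'] (φ : M [⋀^Fin 3]→ₗ[R] N) (g : M' →ₗ[R] M) (x y z : M') :
    φ.compLinearMap g ![x, y, z] = φ ![g x, g y, g z] :=
  congrArg φ (FinVec.map_eq g ![x, y, z]).symm

theorem alternatingMap_vec3_swap₁₂ [AddCommGroup N] [Module R N] (φ : M [⋀^Fin 3]→ₗ[R] N)
    (x y z : M) : φ ![y, x, z] = -φ ![x, y, z] := by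
  have hswap : ![x, y, z] ∘ Equiv.swap 0 1 = ![y, x, z] := by ext i : 1; fin_cases i <;> rfl
  rw [← hswap, φ.map_swap _ (by decide)]

theorem alternatingMap_vec3_swap₂₃ [AddCommGroup N] [Module R N] (φ : M [⋀^Fin 3]→ₗ[R] N)
    (x y z : M) : φ ![x, z, y] = -φ ![x, y, z] := by
  have hswap : ![x, y, z] ∘ Equiv.swap 1 2 = ![x, z, y] := by ext i : 1; fin_cases i <;> rfl
  rw [← hswap, φ.map_swap _ (by decide)]

end AlternatingMap

section G2

theorem dx_apply (i j k : Fin 7) (x y z : Fin 7 → ℝ) :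
    dx i j k ![x, y, z] =
      x i * y j * z k - x i * y k * z j - x j * y i * z k + x j * y k * z i +
        x k * y i * z j - x k * y j * z i :=
  det_fin_three _

/-- The contraction `½ ∑ⱼₖ c i j k * φ₀ l j k` of the coefficients `c` of a 3-form with those of
`phi0`, written out for coefficients that are skew in the last two indices; row `i` is the vector
dual to the 2-form `c i`. -/
def contractPhi0 (c : Fin 7 → Fin 7 → Fin 7 → ℝ) : Matrix (Fin 7) (Fin 7) ℝ :=
  of fun i ↦
    ![c i 1 2 + c i 3 4 + c i 5 6, -c i 0 2 + c i 3 5 - c i 4 6, c i 0 1 - c i 3 6 - c i 4 5,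
      -c i 0 4 - c i 1 5 + c i 2 6, c i 0 3 + c i 1 6 + c i 2 5, -c i 0 6 + c i 1 3 - c i 2 4,
      c i 0 5 - c i 1 4 - c i 2 3]

/-- A linear right inverse of the infinitesimal action `A ↦ A · phi0` of `𝔤𝔩(7, ℝ)`, in
coordinates: row `i` is the image of the `i`-th basis vector.

The contraction with `phi0` is adjoint to the infinitesimal action, and contracting `A · phi0`
multiplies the `G₂`-components `ℝ`, `S²₀`, `Λ²₇`, `Λ²₁₄` of `A` by `9`, `2`, `6`, `0`. The
coefficients below are those for which scalar, traceless symmetric and skew matrices in the image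
of the contraction get divided by `9`, `2` and `6` respectively. -/
noncomputable def phi0ActionInv (c : Fin 7 → Fin 7 → Fin 7 → ℝ) : Matrix (Fin 7) (Fin 7) ℝ :=
  (1 / 3 : ℝ) • contractPhi0 c + (1 / 6 : ℝ) • (contractPhi0 c)ᵀ -
    ((contractPhi0 c).trace / 18) • 1

variable {c : Fin 7 → Fin 7 → Fin 7 → ℝ}

theorem trace_contractPhi0 (swap₁₂ : ∀ i j k, c j i k = -c i j k)
    (swap₂₃ : ∀ i j k, c i k j = -c i j k) :
    (contractPhi0 c).trace =
      3 * (c 0 1 2 + c 0 3 4 + c 0 5 6 + c 1 3 5 - c 1 4 6 - c 2 3 6 - c 2 4 5) := by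
  -- The order hypotheses keep these permutation rules from looping in `simp`.
  have sort₁₂ (i j k) (_ : j < i) : c i j k = -c j i k := swap₁₂ j i k
  have sort₂₃ (i j k) (_ : k < j) : c i j k = -c i k j := swap₂₃ i k j
  simp only [trace, diag_apply, contractPhi0, of_apply, cons_val, Fin.sum_univ_seven, Fin.isValue,
    Fin.reduceLT, sort₁₂, sort₂₃]
  ring

theorem phi0ActionInv_apply (swap₁₂ : ∀ i j k, c j i k = -c i j k)
    (swap₂₃ : ∀ i j k, c i k j = -c i j k) (i l : Fin 7) :
    phi0ActionInv c i l = 1 / 3 * contractPhi0 c i l + 1 / 6 * contractPhi0 c l i -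
      if i = l then
        1 / 6 * (c 0 1 2 + c 0 3 4 + c 0 5 6 + c 1 3 5 - c 1 4 6 - c 2 3 6 - c 2 4 5)
      else 0 := by
  simp only [phi0ActionInv, trace_contractPhi0 swap₁₂ swap₂₃, Matrix.sub_apply, Matrix.add_apply,
    Matrix.smul_apply, transpose_apply, one_apply, smul_eq_mul, mul_ite, mul_one, mul_zero]
  congr 2
  ring

set_option maxHeartbeats 1000000 in
-- One coordinate identity for each of the `35` triples `i < j < k`.
theorem phi0_phi0ActionInv (swap₁₂ : ∀ i j k, c j i k = -c i j k)
    (swap₂₃ : ∀ i j k, c i k j = -c i j k) {i j k : Fin 7} (hij : i < j) (hjk : j < k) :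
    phi0 ![phi0ActionInv c i, Pi.single j 1, Pi.single k 1] +
        phi0 ![Pi.single i 1, phi0ActionInv c j, Pi.single k 1] +
        phi0 ![Pi.single i 1, Pi.single j 1, phi0ActionInv c k] = c i j k := by
  have sort₁₂ (i j k) (_ : j < i) : c i j k = -c j i k := swap₁₂ j i k
  have sort₂₃ (i j k) (_ : k < j) : c i j k = -c i k j := swap₂₃ i k j
  have zero₁₂ (i k) : c i i k = 0 := by linarith [swap₁₂ i i k]
  have zero₂₃ (i k) : c i k k = 0 := by linarith [swap₂₃ i k k]
  fin_cases i <;> fin_cases j <;> try exact absurd hij (by decide)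
  all_goals fin_cases k <;> try exact absurd hjk (by decide)
  all_goals
    simp only [phi0, Fin.isValue, Fin.zero_eta, Fin.mk_one, Fin.reduceFinMk,
      AlternatingMap.sub_apply, AlternatingMap.add_apply, dx_apply, Pi.single_eq_same, mul_one,
      ne_eq, Fin.reduceEq, not_false_eq_true, Pi.single_eq_of_ne, mul_zero, sub_zero, zero_sub,
      zero_add, add_zero, sub_self, one_mul, zero_mul]
    simp only [phi0ActionInv_apply swap₁₂ swap₂₃, contractPhi0, of_apply, cons_val, zero₁₂, zero₂₃,
      Fin.isValue, Fin.reduceEq, Fin.reduceLT, reduceIte, sort₁₂, sort₂₃]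
    ring

theorem surjective_fderivCompContinuousLinearMap_phi0 :
    Function.Surjective ((toContinuousAlternatingMap phi0).fderivCompContinuousLinearMap
      (.id ℝ (Fin 7 → ℝ))) := by
  intro ψ
  let c i j k := ψ ![Pi.single i 1, Pi.single j 1, Pi.single k 1]
  have swap₁₂ (i j k) : c j i k = -c i j k := alternatingMap_vec3_swap₁₂ ψ.toAlternatingMap _ _ _
  have swap₂₃ (i j k) : c i k j = -c i j k := alternatingMap_vec3_swap₂₃ ψ.toAlternatingMap _ _ _
  refine ⟨(phi0ActionInv c).vecMulLinear.toContinuousLinearMap,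
    ContinuousAlternatingMap.toAlternatingMap_injective <|
      alternatingMap_ext_of_strictMono (Pi.basisFun ℝ (Fin 7)) fun p hp ↦ ?_⟩
  have hbasis : Pi.basisFun ℝ (Fin 7) ∘ p =
      ![Pi.single (p 0) 1, Pi.single (p 1) 1, Pi.single (p 2) 1] := by
    ext a : 1
    fin_cases a <;> simp
  rw [hbasis]
  change ContinuousAlternatingMap.fderivCompContinuousLinearMap _ _ _ _ = c (p 0) (p 1) (p 2)
  rw [fderivCompContinuousLinearMap_id_vec3,
    ← phi0_phi0ActionInv swap₁₂ swap₂₃ (hp (by decide : 0 < 1)) (hp (by decide : 1 < 2))]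
  simp [row]

end G2

/-- The `GL(7,ℝ)`-orbit of `φ₀` under pullback is open in the space of alternating
3-forms on `ℝ⁷`. -/
theorem statement1 :
    IsOpen {ψ : AlternatingMap ℝ (Fin 7 → ℝ) ℝ (Fin 3) |
      ∃ g : (Fin 7 → ℝ) →ₗ[ℝ] (Fin 7 → ℝ), Function.Bijective g ∧
        ∀ v₁ v₂ v₃ : Fin 7 → ℝ, ψ ![v₁, v₂, v₃] = phi0 ![g v₁, g v₂, g v₃]} := by
  have hcont : Continuous fun ψ : (Fin 7 → ℝ) [⋀^Fin 3]→ₗ[ℝ] ℝ ↦ toContinuousAlternatingMap ψ :=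
    continuous_toContinuousAlternatingMap fun v ↦ (continuous_apply v).comp continuous_induced_dom
  have hopen := (isOpen_range_compContinuousLinearMap
    surjective_fderivCompContinuousLinearMap_phi0).preimage hcont
  refine (congrArg IsOpen (Set.ext fun ψ ↦ ?_)).mpr hopen
  rw [mem_preimage, toContinuousAlternatingMap_mem_range_iff]
  simp only [alternatingMap_ext_vec3, compLinearMap_vec3, mem_ofPred_eq]
end

section
/- The fixed point sets of α, β and γ in T⁷ are pairwise disjoint: no point of T⁷ is fixed by two distinct elements of {α, β, γ}. -/
/-- The 7-torus `T⁷ = (ℝ/ℤ)⁷`. -/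
abbrev T7 : Type := Fin 7 → AddCircle (1 : ℝ)

/-- The element `½ ∈ ℝ/ℤ`. -/
noncomputable def half : AddCircle (1 : ℝ) := ((1 / 2 : ℝ) : AddCircle (1 : ℝ))

/-- `α(x) = (x₁, x₂, x₃, −x₄, −x₅, −x₆, −x₇)` on `T⁷` (with 0-based indexing). -/
noncomputable def tα : T7 → T7 := fun x => ![x 0, x 1, x 2, -x 3, -x 4, -x 5, -x 6]

/-- `β(x) = (x₁, −x₂, −x₃, x₄, x₅, ½−x₆, −x₇)` on `T⁷` (with 0-based indexing). -/
noncomputable def tβ : T7 → T7 := fun x => ![x 0, -x 1, -x 2, x 3, x 4, half - x 5, -x 6]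

/-- `γ(x) = (−x₁, x₂, −x₃, x₄, ½−x₅, x₆, ½−x₇)` on `T⁷` (with 0-based indexing). -/
noncomputable def tγ : T7 → T7 := fun x => ![-x 0, x 1, -x 2, x 3, half - x 4, x 5, half - x 6]

lemma tα_invol : Function.Involutive tα := by
  intro x; funext i
  fin_cases i
  · rfl
  · rfl
  · rfl
  · exact neg_neg _
  · exact neg_neg _
  · exact neg_neg _
  · exact neg_neg _

lemma tβ_invol : Function.Involutive tβ := by
  intro x; funext i
  fin_cases i
  · rfl
  · exact neg_neg _
  · exact neg_neg _
  · rfl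
  · rfl
  · exact sub_sub_cancel _ _
  · exact neg_neg _

lemma tγ_invol : Function.Involutive tγ := by
  intro x; funext i
  fin_cases i
  · exact neg_neg _
  · rfl
  · exact neg_neg _
  · rfl
  · exact sub_sub_cancel _ _
  · rfl
  · exact sub_sub_cancel _ _

/-- `α` as a bijection (element of the group of bijections) of `T⁷`. -/
noncomputable def pα : Equiv.Perm T7 := Function.Involutive.toPerm tα tα_invol

/-- `β` as a bijection (element of the group of bijections) of `T⁷`. -/
noncomputable def pβ : Equiv.Perm T7 := Function.Involutive.toPerm tβ tβ_invol

/-- `γ` as a bijection (element of the group of bijections) of `T⁷`. -/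
noncomputable def pγ : Equiv.Perm T7 := Function.Involutive.toPerm tγ tγ_invol

/-!
Any two of the maps act on some coordinate `t` by `t ↦ -t` and `t ↦ ½ - t`: the sixth coordinate
for `α` and `β`, the seventh for the other two pairs. At a common fixed point `-t = t = ½ - t`,
so `½ = 0` in `ℝ/ℤ`, whereas `½` has order two.
-/

theorem coe_half_period_ne_zero {𝕜 : Type*} [Field 𝕜] [LinearOrder 𝕜] [IsStrictOrderedRing 𝕜]
    (p : 𝕜) [Fact (0 < p)] : ((p / 2 : 𝕜) : AddCircle p) ≠ 0 := by
  have order_eq_two : addOrderOf ((p / 2 : 𝕜) : AddCircle p) = 2 :=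
    mod_cast AddCircle.addOrderOf_period_div (p := p) two_pos
  intro h
  simp [h] at order_eq_two

theorem half_ne_zero : half ≠ 0 :=
  coe_half_period_ne_zero 1

theorem sub_ne_self_of_neg_eq_self {G : Type*} [AddGroup G] {a t : G} (ha : a ≠ 0)
    (ht : -t = t) : a - t ≠ t := by
  have double_eq_zero : t + t = 0 := neg_eq_iff_add_eq_zero.mp ht
  rwa [Ne, sub_eq_iff_eq_add, double_eq_zero]

/-- No point of `T⁷` is fixed by two distinct elements of `{α, β, γ}`: the fixed point sets of
`α`, `β` and `γ` are pairwise disjoint. -/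
theorem statement10 :
    (∀ x : T7, tα x = x → tβ x ≠ x) ∧
    (∀ x : T7, tα x = x → tγ x ≠ x) ∧
    (∀ x : T7, tβ x = x → tγ x ≠ x) := by
  refine ⟨fun x hα hβ => ?_, fun x hα hγ => ?_, fun x hβ hγ => ?_⟩
  · exact sub_ne_self_of_neg_eq_self half_ne_zero (congrFun hα 5) (congrFun hβ 5)
  · exact sub_ne_self_of_neg_eq_self half_ne_zero (congrFun hα 6) (congrFun hγ 6)
  · exact sub_ne_self_of_neg_eq_self half_ne_zero (congrFun hβ 6) (congrFun hγ 6)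
end
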